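/- arXiv:1810.10577 — 2 statements merged into one kernel-verified Lean document; each statement's English description precedes it below -/
import Mathlib

section
/- Let G be the 4×4 toroidal chess graph. In the game of Cops and Robbers on G in which every cop is a knight and the robber is on foot, the cop number of G is exactly 2: two knight cops have a winning strategy, and one knight cop does not. -/
/-!
Since `2 = -2` modulo `4`, a knight on `v` attacks exactly the grid neighbours of the antipode
`v + (2, 2)`.

One knight loses: the robber starts on the knight's antipode, and steps back onto it whenever he
is attacked; the antipode is neither occupied nor attacked by the knight.

Two knights win from the adjacent vertices `(0, 0)` and `(0, 1)`: every vertex is a knight move or a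
grid step away from one of them. In the first case that knight captures the robber at once. In the
second it moves to the robber's antipode, from where it attacks all his neighbours, while the
other knight makes a parallel move; remaining adjacent to that antipode, it attacks the robber
himself. Whatever the robber does, he is then captured.
-/

/-- Vertices of the `n × n` toroidal chess graph: pairs of coordinates mod `n`. -/
abbrev V (n : ℕ) : Type := ZMod n × ZMod n

/-- "On foot" moves (toroidal grid adjacency): the target differs from the current
vertex by `(±1,0)` or `(0,±1)` mod `n`. -/
def footMove (n : ℕ) (v w : V n) : Prop :=
  w - v = (1, 0) ∨ w - v = (-1, 0) ∨ w - v = (0, 1) ∨ w - v = (0, -1)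

/-- Knight moves: the target differs from the current vertex by `(±1,±2)` or
`(±2,±1)` mod `n`. -/
def knightMove (n : ℕ) (v w : V n) : Prop :=
  w - v = (1, 2) ∨ w - v = (1, -2) ∨ w - v = (-1, 2) ∨ w - v = (-1, -2) ∨
    w - v = (2, 1) ∨ w - v = (2, -1) ∨ w - v = (-2, 1) ∨ w - v = (-2, -1)

/-- One turn of a piece with allowable-move relation `R`: either stay on the current
vertex or move to an allowable vertex. -/
def stayOr {α : Type*} (R : α → α → Prop) (v w : α) : Prop := w = v ∨ R v w

/-- `CopsWin copMove robMove c r t` holds when, from the position in which the `k`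
cops occupy the vertices `c : Fin k → V n` (cop `i` moving by the relation
`copMove i`), the robber (moving by `robMove`) occupies `r`, and it is the cops'
turn iff `t = true`, the cops can force that after finitely many turns some cop
occupies the robber's vertex.  On the cops' turn every cop simultaneously either
stays or makes an allowable move; likewise for the robber on his turn. -/
inductive CopsWin {n k : ℕ} (copMove : Fin k → V n → V n → Prop)
    (robMove : V n → V n → Prop) : (Fin k → V n) → V n → Bool → Prop
  | caught {c : Fin k → V n} {r : V n} {t : Bool} (h : ∃ i, c i = r) :
      CopsWin copMove robMove c r t
  | copsTurn {c : Fin k → V n} {r : V n} (c' : Fin k → V n)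
      (h : ∀ i, stayOr (copMove i) (c i) (c' i))
      (hw : CopsWin copMove robMove c' r false) : CopsWin copMove robMove c r true
  | robTurn {c : Fin k → V n} {r : V n}
      (hw : ∀ r', stayOr robMove r r' → CopsWin copMove robMove c r' true) :
      CopsWin copMove robMove c r false

/-- The `k` cops have a winning strategy: they can choose starting vertices
(repetitions allowed) so that, whatever starting vertex the robber then chooses,
the cops (moving first) can force a capture in finitely many turns. -/
def CopsHaveWinningStrategy {n : ℕ} (k : ℕ) (copMove : Fin k → V n → V n → Prop)
    (robMove : V n → V n → Prop) : Prop :=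
  ∃ c : Fin k → V n, ∀ r : V n, CopsWin copMove robMove c r true

/-- The cop number of the `n × n` toroidal chess graph, for the game in which,
when there are `k` cops, cop `i` moves by the relation `copMove k i` and the
robber moves by `robMove`: the minimum number of cops having a winning strategy. -/
noncomputable def copNumber (n : ℕ) (copMove : ∀ k, Fin k → V n → V n → Prop)
    (robMove : V n → V n → Prop) : ℕ :=
  sInf {k | CopsHaveWinningStrategy k (copMove k) robMove}

section Game

variable {n k m : ℕ} {copMove : Fin k → V n → V n → Prop} {robMove : V n → V n → Prop}
  {c : Fin k → V n} {r : V n} {t : Bool}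

/-- The vertex `v` is guarded by the cops in position `c` if some cop can be on `v` after the next
cops' turn; the vertices occupied by a cop are included, since a cop may stay. -/
def Guarded (copMove : Fin k → V n → V n → Prop) (c : Fin k → V n) (v : V n) : Prop :=
  ∃ i, stayOr (copMove i) (c i) v

theorem CopsWin.of_guarded (h : Guarded copMove c r) : CopsWin copMove robMove c r true := by
  obtain ⟨i, hi⟩ := h
  refine .copsTurn (Function.update c i r) (fun j => ?_) (.caught ⟨i, Function.update_self i r c⟩)
  obtain rfl | hji := eq_or_ne j i
  · rwa [Function.update_self]
  · exact .inl (Function.update_of_ne hji r c)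

theorem CopsWin.exists_eq_or_guarded
    (hescape : ∀ c r, (∀ i, c i ≠ r) → ∃ r', stayOr robMove r r' ∧ ¬ Guarded copMove c r')
    (h : CopsWin copMove robMove c r t) :
    (∃ i, c i = r) ∨ (t = true ∧ Guarded copMove c r) := by
  induction h with
  | caught hcaught => exact .inl hcaught
  | copsTurn c' hmove _ ih =>
    obtain ⟨i, rfl⟩ | ⟨hturn, _⟩ := ih
    · exact .inr ⟨rfl, i, hmove i⟩
    · exact absurd hturn Bool.false_ne_true
  | @robTurn c r _ ih =>
    by_contra! huncaught
    obtain ⟨r', hr', hsafe⟩ := hescape c r huncaught.1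
    obtain ⟨i, hi⟩ | ⟨_, hguarded⟩ := ih r' hr'
    · exact hsafe ⟨i, .inl hi.symm⟩
    · exact hsafe hguarded

theorem not_copsHaveWinningStrategy_of_escape
    (hstart : ∀ c, ∃ r, ¬ Guarded copMove c r)
    (hescape : ∀ c r, (∀ i, c i ≠ r) → ∃ r', stayOr robMove r r' ∧ ¬ Guarded copMove c r') :
    ¬ CopsHaveWinningStrategy k copMove robMove := by
  rintro ⟨c, hwin⟩
  obtain ⟨r, hsafe⟩ := hstart c
  obtain ⟨i, hi⟩ | ⟨_, hguarded⟩ := (hwin r).exists_eq_or_guarded hescape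
  · exact hsafe ⟨i, .inl hi.symm⟩
  · exact hsafe hguarded

/-- The cops outside the range of `f` stay put. -/
theorem CopsWin.of_comp_injective {f : Fin m → Fin k} (hf : f.Injective)
    (h : CopsWin (copMove ∘ f) robMove (c ∘ f) r t) : CopsWin copMove robMove c r t := by
  generalize hd : c ∘ f = d at h
  induction h generalizing c with
  | caught hcaught =>
    obtain ⟨i, rfl⟩ := hcaught
    exact .caught ⟨f i, congrFun hd i⟩
  | copsTurn d' hmove _ ih =>
    refine .copsTurn (Function.extend f d' c) (fun j => ?_) (ih (Function.extend_comp hf d' c))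
    by_cases hj : ∃ i, f i = j
    · obtain ⟨i, rfl⟩ := hj
      simpa only [hf.extend_apply, ← hd, Function.comp_apply] using hmove i
    · exact .inl (Function.extend_apply' d' c j hj)
  | robTurn _ ih => exact .robTurn fun r' hr' => ih r' hr' hd

theorem CopsHaveWinningStrategy.of_comp_injective {f : Fin m → Fin k} (hf : f.Injective)
    (h : CopsHaveWinningStrategy m (copMove ∘ f) robMove) :
    CopsHaveWinningStrategy k copMove robMove := by
  obtain ⟨c, hwin⟩ := h
  refine ⟨Function.extend f c 0, fun r => .of_comp_injective hf ?_⟩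
  rw [Function.extend_comp hf]
  exact hwin r

theorem copNumber_eq_succ_iff {pieceMove : V n → V n → Prop} :
    copNumber n (fun _ _ => pieceMove) robMove = k + 1 ↔
      CopsHaveWinningStrategy (k + 1) (fun _ => pieceMove) robMove ∧
        ¬ CopsHaveWinningStrategy k (fun _ => pieceMove) robMove :=
  Nat.sInf_upward_closed_eq_succ_iff
    (fun _ _ hle hwin => hwin.of_comp_injective (Fin.castLE_injective hle)) k

end Game

section Moves

variable {n : ℕ} {u v w : V n}

theorem footMove.symm (h : footMove n v w) : footMove n w v := by
  unfold footMove at h ⊢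
  rw [← neg_sub w v]
  rcases h with h | h | h | h <;> simp [h]

theorem not_footMove_self (hn : n ≠ 1) (v : V n) : ¬ footMove n v v := by
  have := ZMod.nontrivial_iff.2 hn
  simp [footMove, Prod.ext_iff]

theorem footMove_add_right_iff : footMove n (v + u) (w + u) ↔ footMove n v w := by
  simp only [footMove, add_sub_add_right_eq_sub]

theorem knightMove_add_sub_iff : knightMove n u (u + (w - v)) ↔ knightMove n v w := by
  simp only [knightMove, add_sub_cancel_left]

end Moves

section Four

/-- The vertex of the `4 × 4` torus opposite to `v`, at the maximal grid distance `4` from it. -/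
def antipode (v : V 4) : V 4 := v + (2, 2)

theorem antipode_antipode (v : V 4) : antipode (antipode v) = v := by
  have htwo : ((2, 2) : V 4) + (2, 2) = 0 := by decide
  rw [antipode, antipode, add_assoc, htwo, add_zero]

theorem antipode_ne_self (v : V 4) : antipode v ≠ v := by
  have htwo : ((2, 2) : V 4) ≠ 0 := by decide
  simpa only [antipode, ne_eq, add_eq_left] using htwo

theorem knightMove_iff_footMove_antipode {v w : V 4} :
    knightMove 4 v w ↔ footMove 4 (antipode v) w := by
  have hdiff : ∀ d : V 4, knightMove 4 0 d ↔ footMove 4 (2, 2) d := by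
    unfold knightMove footMove
    decide
  simpa only [knightMove, footMove, antipode, sub_zero, sub_add_eq_sub_sub] using hdiff (w - v)

theorem knightMove_antipode_iff_footMove {v w : V 4} :
    knightMove 4 (antipode v) w ↔ footMove 4 v w := by
  rw [knightMove_iff_footMove_antipode, antipode_antipode]

theorem knightMove_antipode_right_iff_footMove {v w : V 4} :
    knightMove 4 v (antipode w) ↔ footMove 4 v w := by
  rw [knightMove_iff_footMove_antipode, antipode, antipode, footMove_add_right_iff]

theorem not_stayOr_knightMove_antipode (v : V 4) : ¬ stayOr (knightMove 4) v (antipode v) := by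
  rintro (heq | hmove)
  · exact antipode_ne_self v heq
  · exact not_footMove_self (by decide) _ (knightMove_iff_footMove_antipode.1 hmove)

theorem exists_stayOr_footMove_not_stayOr_knightMove {c r : V 4} (hne : c ≠ r) :
    ∃ r', stayOr (footMove 4) r r' ∧ ¬ stayOr (knightMove 4) c r' := by
  by_cases hattacked : knightMove 4 c r
  · exact ⟨antipode c, .inr (knightMove_iff_footMove_antipode.1 hattacked).symm,
      not_stayOr_knightMove_antipode c⟩
  · exact ⟨r, .inl rfl, not_or.2 ⟨hne.symm, hattacked⟩⟩

theorem not_copsHaveWinningStrategy_one_knight :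
    ¬ CopsHaveWinningStrategy 1 (fun _ : Fin 1 => knightMove 4) (footMove 4) := by
  refine not_copsHaveWinningStrategy_of_escape (fun c => ⟨antipode (c 0), ?_⟩) fun c r hne => ?_
  · exact fun hguarded => not_stayOr_knightMove_antipode (c 0) (Fin.exists_fin_one.1 hguarded)
  · obtain ⟨r', hr', hsafe⟩ := exists_stayOr_footMove_not_stayOr_knightMove (hne 0)
    exact ⟨r', hr', fun hguarded => hsafe (Fin.exists_fin_one.1 hguarded)⟩

variable {k : ℕ} {c : Fin k → V 4} {r : V 4} {i j : Fin k}

theorem copsWin_of_eq_antipode_of_knightMove (hi : c i = antipode r)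
    (hj : knightMove 4 (c j) r) : CopsWin (fun _ => knightMove 4) (footMove 4) c r false := by
  refine .robTurn fun r' hr' => .of_guarded ?_
  rcases hr' with rfl | hstep
  · exact ⟨j, .inr hj⟩
  · exact ⟨i, .inr (hi ▸ knightMove_antipode_iff_footMove.2 hstep)⟩

/-- All cops make the move that brings cop `i` to the robber's antipode. -/
theorem copsWin_of_footMove_of_footMove (hij : footMove 4 (c i) (c j))
    (hr : footMove 4 (c i) r) : CopsWin (fun _ => knightMove 4) (footMove 4) c r true := by
  set d := antipode r - c i
  have hmove : knightMove 4 (c i) (antipode r) := knightMove_antipode_right_iff_footMove.2 hr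
  have hi : c i + d = antipode r := add_sub_cancel (c i) (antipode r)
  have hj : knightMove 4 (c j + d) r := by
    have hstep : footMove 4 (antipode r) (c j + d) := hi ▸ footMove_add_right_iff.2 hij
    rw [← antipode_antipode r]
    exact knightMove_antipode_right_iff_footMove.2 hstep.symm
  exact .copsTurn (fun l => c l + d) (fun l => .inr (knightMove_add_sub_iff.2 hmove))
    (copsWin_of_eq_antipode_of_knightMove hi hj)

theorem exists_knightMove_or_footMove (r : V 4) :
    ∃ i, knightMove 4 (![(0, 0), (0, 1)] i) r ∨ footMove 4 (![(0, 0), (0, 1)] i) r := by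
  unfold knightMove footMove
  revert r
  decide

theorem copsHaveWinningStrategy_two_knights :
    CopsHaveWinningStrategy 2 (fun _ : Fin 2 => knightMove 4) (footMove 4) := by
  have hadj : footMove 4 (0, 0) (0, 1) := by
    unfold footMove
    decide
  refine ⟨![(0, 0), (0, 1)], fun r => ?_⟩
  obtain ⟨i, hattack | hstep⟩ := exists_knightMove_or_footMove r
  · exact .of_guarded ⟨i, .inr hattack⟩
  · match i with
    | 0 => exact copsWin_of_footMove_of_footMove (i := 0) (j := 1) hadj hstep
    | 1 => exact copsWin_of_footMove_of_footMove (i := 1) (j := 0) hadj.symm hstep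

end Four

/-- On the `4 × 4` toroidal chess graph, with every cop a knight
and the robber on foot, the cop number is exactly `2`: two knight cops have a
winning strategy, and one knight cop does not. -/
theorem copNumber_knights_footRobber_four_eq_two :
    copNumber 4 (fun _ _ => knightMove 4) (footMove 4) = 2 ∧
    CopsHaveWinningStrategy 2 (fun _ : Fin 2 => knightMove 4) (footMove 4) ∧
    ¬ CopsHaveWinningStrategy 1 (fun _ : Fin 1 => knightMove 4) (footMove 4) :=
  ⟨copNumber_eq_succ_iff.2
      ⟨copsHaveWinningStrategy_two_knights, not_copsHaveWinningStrategy_one_knight⟩,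
    copsHaveWinningStrategy_two_knights, not_copsHaveWinningStrategy_one_knight⟩
end

section
/- Let n ≥ 5 and let G be the n×n toroidal chess graph, with three cops that are knights and a robber on foot. Suppose the three cops start on the vertices a, a+(2,2), and a+(4,0) for some vertex a. Then, by always making all three cops move identically (so the three cops' positions remain a translate a'+(0,0), a'+(2,2), a'+(4,0) of the starting formation), the cops can guarantee that after a finite number of moves the robber occupies a vertex of the translated 3×5 rectangular array {a'+(i,j) : 0 ≤ i ≤ 4, 0 ≤ j ≤ 2}, where a' is the current anchor of the formation. -/
/-- `FormationTraps n a r t`: three knight cops occupy the translated formation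
`a + (0,0)`, `a + (2,2)`, `a + (4,0)` with anchor `a`, the robber (on foot)
occupies `r`, and it is the cops' turn iff `t = true`.  The cops always move all
three pieces identically (each cops' turn, all three cops either all stay or all
make the same knight move, so their positions remain a translate of the starting
formation and the anchor `a` itself stays or makes a knight move); the predicate
says the cops can guarantee that after a finite number of moves the robber
occupies a vertex of the translated `3 × 5` rectangular array
`{a' + (i,j) : 0 ≤ i ≤ 4, 0 ≤ j ≤ 2}`, where `a'` is the current anchor. -/
inductive FormationTraps (n : ℕ) : V n → V n → Bool → Prop
  | trapped {a r : V n} {t : Bool}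
      (h : ∃ i j : ℕ, i ≤ 4 ∧ j ≤ 2 ∧ r = a + ((i : ZMod n), (j : ZMod n))) :
      FormationTraps n a r t
  | copsTurn {a r : V n} (a' : V n) (h : stayOr (knightMove n) a a')
      (hw : FormationTraps n a' r false) : FormationTraps n a r true
  | robTurn {a r : V n}
      (hw : ∀ r', stayOr (footMove n) r r' → FormationTraps n a r' true) :
      FormationTraps n a r false

/-- The covering map from the infinite chessboard `ℤ × ℤ` to the torus, reducing both coordinates
mod `n`. Steps of the pieces are lifted along it. -/
def toTorus (n : ℕ) : ℤ × ℤ →+ V n :=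
  (Int.castAddHom (ZMod n)).prodMap (Int.castAddHom (ZMod n))

/-- The steps of a knight on the infinite chessboard. -/
def IsKnightStep (e : ℤ × ℤ) : Prop :=
  |e.1| = 1 ∧ |e.2| = 2 ∨ |e.1| = 2 ∧ |e.2| = 1

/-- The vertex at integer offset `p` from the centre `a + (2, 1)` of the `5 × 3` array anchored
at `a`. -/
def atOffset {n : ℕ} (a : V n) (p : ℤ × ℤ) : V n := a + toTorus n (p + (2, 1))

/-- The boxes of offsets into which the cops drive the robber, indexed so that `offsetBox 0`
is the `5 × 3` array. -/
def offsetBox (k : ℕ) : Set (ℤ × ℤ) := {p | |p.1| ≤ k + 2 ∧ |p.2| ≤ k + 1}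

/-- The box `offsetBox (k + 2)` without its four corners: the offsets within reach of a robber on
foot who starts his turn in `offsetBox (k + 1)`. -/
def clippedBox (k : ℕ) : Set (ℤ × ℤ) :=
  {p | |p.1| ≤ k + 4 ∧ |p.2| ≤ k + 3 ∧ |p.1| + |p.2| ≤ 2 * k + 6}

section Torus

variable {n : ℕ}

lemma toTorus_apply (p : ℤ × ℤ) : toTorus n p = ((p.1 : ZMod n), (p.2 : ZMod n)) := rfl

lemma toTorus_surjective : Function.Surjective (toTorus n) :=
  Function.Surjective.prodMap ZMod.intCast_surjective ZMod.intCast_surjective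

lemma knightMove_add_toTorus (a : V n) {e : ℤ × ℤ} (he : IsKnightStep e) :
    knightMove n a (a + toTorus n e) := by
  obtain ⟨x, y⟩ := e
  simp only [IsKnightStep, abs_eq (zero_le_one (α := ℤ)), abs_eq (zero_le_two (α := ℤ))] at he
  rcases he with ⟨rfl | rfl, rfl | rfl⟩ | ⟨rfl | rfl, rfl | rfl⟩ <;>
    simp [knightMove, toTorus_apply]

lemma exists_eq_add_toTorus_of_stayOr_footMove {r r' : V n} (h : stayOr (footMove n) r r') :
    ∃ d : ℤ × ℤ, |d.1| + |d.2| ≤ 1 ∧ r' = r + toTorus n d := by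
  simp only [stayOr, footMove, sub_eq_iff_eq_add'] at h
  rcases h with rfl | rfl | rfl | rfl | rfl
  · exact ⟨(0, 0), by simp, by simp [toTorus_apply]⟩
  · exact ⟨(1, 0), by simp, by simp [toTorus_apply]⟩
  · exact ⟨(-1, 0), by simp, by simp [toTorus_apply]⟩
  · exact ⟨(0, 1), by simp, by simp [toTorus_apply]⟩
  · exact ⟨(0, -1), by simp, by simp [toTorus_apply]⟩

lemma atOffset_surjective (a : V n) : Function.Surjective (atOffset a) :=
  (AddGroup.addLeft_bijective a).surjective.comp
    (toTorus_surjective.comp (add_right_surjective (2, 1)))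

lemma atOffset_add_toTorus (a : V n) (p d : ℤ × ℤ) :
    atOffset a p + toTorus n d = atOffset a (p + d) := by
  simp only [atOffset, map_add]
  abel

lemma atOffset_anchor_add_toTorus (a : V n) (p e : ℤ × ℤ) :
    atOffset (a + toTorus n e) (p - e) = atOffset a p := by
  simp only [atOffset, map_add, map_sub]
  abel

end Torus

lemma exists_abs_eq_and_abs_sub_eq (x : ℤ) {m : ℤ} (hm : 0 ≤ m) :
    ∃ s : ℤ, |s| = m ∧ |x - s| = |(|x| - m)| := by
  rcases le_total 0 x with hx | hx
  · exact ⟨m, abs_of_nonneg hm, by rw [abs_of_nonneg hx]⟩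
  · refine ⟨-m, by rw [abs_neg, abs_of_nonneg hm], ?_⟩
    rw [abs_of_nonpos hx, ← abs_neg (x - -m)]
    ring_nf

lemma add_mem_clippedBox {k : ℕ} {p d : ℤ × ℤ} (hp : p ∈ offsetBox (k + 1))
    (hd : |d.1| + |d.2| ≤ 1) : p + d ∈ clippedBox k := by
  obtain ⟨hp₁, hp₂⟩ := hp
  push_cast at hp₁ hp₂
  have h₁ : |(p + d).1| ≤ |p.1| + |d.1| := abs_add_le p.1 d.1
  have h₂ : |(p + d).2| ≤ |p.2| + |d.2| := abs_add_le p.2 d.2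
  have hd₁ := abs_nonneg d.1
  have hd₂ := abs_nonneg d.2
  exact ⟨by linarith, by linarith, by linarith⟩

lemma exists_isKnightStep_sub_mem_offsetBox {k : ℕ} {p : ℤ × ℤ} (hp : p ∈ clippedBox k) :
    ∃ e, IsKnightStep e ∧ p - e ∈ offsetBox k := by
  obtain ⟨hp₁, hp₂, hclip⟩ := hp
  have hnonneg₁ := abs_nonneg p.1
  have hnonneg₂ := abs_nonneg p.2
  rcases le_or_gt |p.2| (k + 2) with hsmall | hlarge
  · obtain ⟨s, hs, hps⟩ := exists_abs_eq_and_abs_sub_eq p.1 zero_le_two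
    obtain ⟨t, ht, hpt⟩ := exists_abs_eq_and_abs_sub_eq p.2 zero_le_one
    refine ⟨(s, t), .inr ⟨hs, ht⟩, hps.trans_le ?_, hpt.trans_le ?_⟩ <;>
      exact abs_le.2 ⟨by linarith, by linarith⟩
  · obtain ⟨s, hs, hps⟩ := exists_abs_eq_and_abs_sub_eq p.1 zero_le_one
    obtain ⟨t, ht, hpt⟩ := exists_abs_eq_and_abs_sub_eq p.2 zero_le_two
    refine ⟨(s, t), .inl ⟨hs, ht⟩, hps.trans_le ?_, hpt.trans_le ?_⟩ <;>
      exact abs_le.2 ⟨by linarith, by linarith⟩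

lemma exists_mem_clippedBox (p : ℤ × ℤ) : ∃ k, p ∈ clippedBox k := by
  refine ⟨p.1.natAbs + p.2.natAbs, ?_⟩
  simp only [clippedBox, Set.mem_ofPred_eq, Nat.cast_add, Int.natCast_natAbs]
  have h₁ := abs_nonneg p.1
  have h₂ := abs_nonneg p.2
  exact ⟨by linarith, by linarith, by linarith⟩

namespace FormationTraps

variable {n : ℕ} {a : V n} {p : ℤ × ℤ}

lemma of_mem_offsetBox_zero {t : Bool} (hp : p ∈ offsetBox 0) :
    FormationTraps n a (atOffset a p) t := by
  obtain ⟨hp₁, hp₂⟩ := hp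
  rw [abs_le] at hp₁ hp₂
  obtain ⟨i, hi⟩ := Int.eq_ofNat_of_zero_le (show 0 ≤ p.1 + 2 by omega)
  obtain ⟨j, hj⟩ := Int.eq_ofNat_of_zero_le (show 0 ≤ p.2 + 1 by omega)
  refine .trapped ⟨i, j, by omega, by omega, ?_⟩
  simp only [atOffset, toTorus_apply, Prod.fst_add, Prod.snd_add, hi, hj, Int.cast_natCast]

lemma of_isKnightStep {e : ℤ × ℤ} (he : IsKnightStep e)
    (h : FormationTraps n (a + toTorus n e) (atOffset (a + toTorus n e) (p - e)) false) :
    FormationTraps n a (atOffset a p) true := by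
  rw [atOffset_anchor_add_toTorus] at h
  exact .copsTurn _ (.inr (knightMove_add_toTorus a he)) h

lemma of_forall_footStep
    (h : ∀ d : ℤ × ℤ, |d.1| + |d.2| ≤ 1 → FormationTraps n a (atOffset a (p + d)) true) :
    FormationTraps n a (atOffset a p) false := by
  refine .robTurn fun r' hr' => ?_
  obtain ⟨d, hd, rfl⟩ := exists_eq_add_toTorus_of_stayOr_footMove hr'
  rw [atOffset_add_toTorus]
  exact h d hd

lemma of_mem_offsetBox {k : ℕ} (hp : p ∈ offsetBox k) :
    FormationTraps n a (atOffset a p) false := by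
  induction k generalizing a p with
  | zero => exact of_mem_offsetBox_zero hp
  | succ k ih =>
    refine of_forall_footStep fun d hd => ?_
    obtain ⟨e, he, hmem⟩ := exists_isKnightStep_sub_mem_offsetBox (add_mem_clippedBox hp hd)
    exact of_isKnightStep he (ih hmem)

end FormationTraps

/-- The case `n = 0` is the game on the infinite chessboard, as `ZMod 0 = ℤ`. -/
theorem formation_traps_robber_general (n : ℕ) (a r : V n) : FormationTraps n a r true := by
  obtain ⟨p, rfl⟩ := atOffset_surjective a r
  obtain ⟨k, hp⟩ := exists_mem_clippedBox p
  obtain ⟨e, he, hmem⟩ := exists_isKnightStep_sub_mem_offsetBox hp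
  exact .of_isKnightStep he (.of_mem_offsetBox hmem)

/-- For `n ≥ 5`, on the `n × n` toroidal chess graph with three
knight cops and a robber on foot: if the three cops start on the vertices `a`,
`a + (2,2)` and `a + (4,0)`, then, by always moving all three cops identically
(so that their positions remain a translate `a' + (0,0)`, `a' + (2,2)`,
`a' + (4,0)` of the starting formation), the cops can guarantee that after a
finite number of moves the robber (starting anywhere) occupies a vertex of the
translated rectangular array `{a' + (i,j) : 0 ≤ i ≤ 4, 0 ≤ j ≤ 2}`, where `a'`
is the current anchor of the formation. -/
theorem formation_traps_robber (n : ℕ) (hn : 5 ≤ n) (a r : V n) :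
    FormationTraps n a r true :=
  formation_traps_robber_general n a r
end
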